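/- Deleting finitely many pairwise disjoint positive circuits preserves balancedness: let (M, O, O*) be a finitary binary balanced oriented matroid with ground set E, let 𝒜 be a finite set of positive signed circuits in O with pairwise disjoint domains, and let A be the union of their domains. Then for every D ∈ O* and every cocircuit K of the deletion M ＼ A such that K = dom(D) ∖ A, the sets {e ∈ K : D(e) = +1} and {e ∈ K : D(e) = −1} have the same cardinality. -/

import Mathlib

open Set Function

variable {α : Type*}

/-- A circuit of a matroid `M`: a minimal dependent set. A cocircuit of `M` is a
circuit of the dual matroid `M✶`. -/
def Matroid.IsMinDepCircuit (M : Matroid α) (C : Set α) : Prop := Minimal M.Dep C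

/-- A signed set, encoded as an integer-valued function taking values `1` or `-1` on its
support (which plays the role of the domain of the signed set) and `0` elsewhere. -/
def IsSignedSet (g : α → ℤ) : Prop := ∀ e ∈ Function.support g, g e = 1 ∨ g e = -1

/-- A signed set is positive if it is constantly `+1` on its domain. -/
def IsPositive (g : α → ℤ) : Prop := ∀ e ∈ Function.support g, g e = 1

/-- `O` is a signature of the set-system `𝒞`: it consists of exactly two signings of each
member of `𝒞`, these two being negatives of each other, and nothing else. -/
structure IsSignature (𝒞 : Set (Set α)) (O : Set (α → ℤ)) : Prop where
  signed : ∀ g ∈ O, IsSignedSet g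
  dom_mem : ∀ g ∈ O, Function.support g ∈ 𝒞
  exists_signing : ∀ C ∈ 𝒞, ∃ g ∈ O, Function.support g = C
  neg_mem : ∀ g ∈ O, -g ∈ O
  eq_or_eq_neg : ∀ g ∈ O, ∀ h ∈ O, Function.support g = Function.support h → h = g ∨ h = -g

/-- `(M, O, Ostar)` is an oriented matroid: `O` is a signature of the circuits of `M`,
`Ostar` is a signature of the cocircuits of `M`, and orthogonality holds: whenever the
domains of `C ∈ O` and `D ∈ Ostar` intersect, the restriction of `C` to the (finite)
intersection is neither equal to, nor the negative of, the restriction of `D`. -/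
structure IsOrientation (M : Matroid α) (O Ostar : Set (α → ℤ)) : Prop where
  circuit_signature : IsSignature {C | M.IsMinDepCircuit C} O
  cocircuit_signature : IsSignature {D | M✶.IsMinDepCircuit D} Ostar
  orthogonality : ∀ C ∈ O, ∀ D ∈ Ostar,
    (Function.support C ∩ Function.support D).Nonempty →
      (¬ ∀ e ∈ Function.support C ∩ Function.support D, C e = D e) ∧
      (¬ ∀ e ∈ Function.support C ∩ Function.support D, C e = - D e)

/-- The oriented matroid is binary: `∑_{e ∈ dom C ∩ dom D} C(e)·D(e) = 0` for every
signed circuit `C ∈ O` and signed cocircuit `D ∈ Ostar` (a finite sum, since circuits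
of a finitary matroid are finite). -/
def IsBinaryOrientation (O Ostar : Set (α → ℤ)) : Prop :=
  ∀ C ∈ O, ∀ D ∈ Ostar, ∑ᶠ e, C e * D e = 0

/-- The oriented matroid is balanced: in every signed cocircuit, the set of positive
elements and the set of negative elements have the same cardinality. -/
def IsBalanced (Ostar : Set (α → ℤ)) : Prop :=
  ∀ D ∈ Ostar, Cardinal.mk {e : α | D e = 1} = Cardinal.mk {e : α | D e = -1}

/-- The deletion `M ＼ F`: the restriction of `M` to the complement of `F`;
its circuits are exactly the circuits of `M` disjoint from `F`. -/
def Matroid.del (M : Matroid α) (F : Set α) : Matroid α := M.restrict (M.E \ F)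

/-!
Let `A` be the union of the deleted circuits and `D` a signed cocircuit. A positive circuit is
constantly `1` on its domain, so orthogonality to `D` says that `D` sums to `0` over that domain;
the domains being disjoint, `D` sums to `0` over `A`. Hence `A` removes from `D` equally many
positive and negative elements, and finitely many of each, so they may be cancelled from the
equality of cardinals that expresses the balance of `D`.
-/

section Finsum

variable {M : Type*} [AddCommMonoid M] {f : α → M}

theorem finsum_mem_eq_ncard_nsmul {s : Set α} {c : M} (hs : s.Finite) (h : ∀ a ∈ s, f a = c) :
    ∑ᶠ a ∈ s, f a = s.ncard • c := by
  rw [finsum_mem_congr rfl h, finsum_mem_eq_finite_toFinset_sum _ hs, Finset.sum_const,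
    ncard_eq_toFinset_card s hs]

theorem finsum_mem_biUnion_of_finite_inter_support {ι : Type*} {I : Set ι} {t : ι → Set α}
    (ht : I.PairwiseDisjoint t) (hf : ((⋃ i ∈ I, t i) ∩ support f).Finite) :
    ∑ᶠ a ∈ ⋃ i ∈ I, t i, f a = ∑ᶠ i ∈ I, ∑ᶠ a ∈ t i, f a := by
  have hdisj : I.PairwiseDisjoint fun i ↦ t i ∩ support f :=
    ht.mono fun i ↦ inter_subset_left
  rw [iUnion₂_inter] at hf
  obtain ⟨hfin, hJfin⟩ := hdisj.finite_biUnion_iff.mp hf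
  set J : Set ι := {i ∈ I | (t i ∩ support f).Nonempty}
  have hJI : J ⊆ I := sep_subset I _
  have hunion : ⋃ i ∈ I, t i ∩ support f = ⋃ i ∈ J, t i ∩ support f := by
    refine subset_antisymm ?_ (biUnion_mono hJI fun _ _ ↦ Subset.rfl)
    exact iUnion₂_subset fun i hi a ha ↦ mem_biUnion (show i ∈ J from ⟨hi, a, ha⟩) ha
  have hmem (i : ι) (hi : ∑ᶠ a ∈ t i ∩ support f, f a ≠ 0) : i ∈ J ↔ i ∈ I :=
    and_iff_left <| nonempty_iff_ne_empty.mpr fun h ↦ hi (by rw [h, finsum_mem_empty])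
  calc ∑ᶠ a ∈ ⋃ i ∈ I, t i, f a
      = ∑ᶠ a ∈ ⋃ i ∈ J, t i ∩ support f, f a := by
        rw [← finsum_mem_inter_support, iUnion₂_inter, hunion]
    _ = ∑ᶠ i ∈ J, ∑ᶠ a ∈ t i ∩ support f, f a :=
        finsum_mem_biUnion (hdisj.subset hJI) hJfin fun i hi ↦ hfin i (hJI hi)
    _ = ∑ᶠ i ∈ I, ∑ᶠ a ∈ t i ∩ support f, f a :=
        finsum_mem_inter_support_eq' _ J I hmem
    _ = ∑ᶠ i ∈ I, ∑ᶠ a ∈ t i, f a := by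
        simp only [finsum_mem_inter_support]

end Finsum

theorem cardinalMk_sdiff_eq_of_finite_inter {P N A : Set α}
    (h : Cardinal.mk P = Cardinal.mk N) (hfin : (N ∩ A).Finite)
    (hinter : Cardinal.mk ↑(P ∩ A) = Cardinal.mk ↑(N ∩ A)) :
    Cardinal.mk ↑(P \ A) = Cardinal.mk ↑(N \ A) := by
  have hsplit (S : Set α) : Cardinal.mk S = Cardinal.mk ↑(S \ A) + Cardinal.mk ↑(S ∩ A) := by
    rw [← Cardinal.mk_union_of_disjoint disjoint_sdiff_inter, sdiff_union_inter]
  rw [hsplit P, hsplit N, hinter] at h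
  exact Cardinal.eq_of_add_eq_add_right h hfin.lt_aleph0

theorem IsPositive.mul_eq_indicator {C : α → ℤ} (hC : IsPositive C) (g : α → ℤ) (e : α) :
    C e * g e = (support C).indicator g e := by
  by_cases he : e ∈ support C
  · rw [indicator_of_mem he, hC e he, one_mul]
  · rw [indicator_of_notMem he, notMem_support.mp he, zero_mul]

theorem IsPositive.finsum_mul_eq_finsum_mem_support {C : α → ℤ} (hC : IsPositive C)
    (g : α → ℤ) : ∑ᶠ e, C e * g e = ∑ᶠ e ∈ support C, g e := by
  simp only [hC.mul_eq_indicator, finsum_mem_def]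

theorem finsum_mem_biUnion_support_eq_zero {𝒜 : Set (α → ℤ)} {g : α → ℤ}
    (hpos : ∀ C ∈ 𝒜, IsPositive C) (hdisj : 𝒜.PairwiseDisjoint support)
    (hfin : ((⋃ C ∈ 𝒜, support C) ∩ support g).Finite)
    (horth : ∀ C ∈ 𝒜, ∑ᶠ e, C e * g e = 0) :
    ∑ᶠ e ∈ ⋃ C ∈ 𝒜, support C, g e = 0 := by
  rw [finsum_mem_biUnion_of_finite_inter_support hdisj hfin]
  refine finsum_mem_eq_zero_of_forall_eq_zero fun C hC ↦ ?_
  rw [← (hpos C hC).finsum_mul_eq_finsum_mem_support, horth C hC]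

theorem setOf_mem_support_sdiff_and_eq (g : α → ℤ) (A : Set α) {z : ℤ} (hz : z ≠ 0) :
    {e | e ∈ support g \ A ∧ g e = z} = {e | g e = z} \ A := by
  ext e
  exact ⟨fun ⟨he, hge⟩ ↦ ⟨hge, he.2⟩,
    fun ⟨hge, he⟩ ↦ ⟨⟨mem_support.mpr (hge.trans_ne hz), he⟩, hge⟩⟩

namespace IsSignedSet

variable {g : α → ℤ} {A : Set α}

theorem support_eq_union (hg : IsSignedSet g) : support g = {e | g e = 1} ∪ {e | g e = -1} := by
  refine Subset.antisymm hg ?_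
  rintro e (he | he) <;> simp_all

theorem inter_support_eq_union (hg : IsSignedSet g) (A : Set α) :
    A ∩ support g = ({e | g e = 1} ∩ A) ∪ ({e | g e = -1} ∩ A) := by
  rw [hg.support_eq_union, inter_comm, union_inter_distrib_right]

theorem finsum_mem_eq_ncard_sub_ncard (hg : IsSignedSet g) (hA : (A ∩ support g).Finite) :
    ∑ᶠ e ∈ A, g e = ({e | g e = 1} ∩ A).ncard - ({e | g e = -1} ∩ A).ncard := by
  have hdisj : Disjoint ({e | g e = 1} ∩ A) ({e | g e = -1} ∩ A) :=
    Set.disjoint_left.mpr fun e hp hn ↦ absurd (hp.1.symm.trans hn.1) (by decide)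
  rw [hg.inter_support_eq_union, finite_union] at hA
  rw [← finsum_mem_inter_support, hg.inter_support_eq_union, finsum_mem_union hdisj hA.1 hA.2,
    finsum_mem_eq_ncard_nsmul hA.1 fun e he ↦ he.1,
    finsum_mem_eq_ncard_nsmul hA.2 fun e he ↦ he.1,
    nsmul_one, smul_neg, nsmul_one, sub_eq_add_neg]

theorem cardinalMk_inter_eq_of_finsum_mem_eq_zero (hg : IsSignedSet g) (hA : (A ∩ support g).Finite)
    (hsum : ∑ᶠ e ∈ A, g e = 0) :
    Cardinal.mk ↑({e | g e = 1} ∩ A) = Cardinal.mk ↑({e | g e = -1} ∩ A) := by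
  rw [hg.finsum_mem_eq_ncard_sub_ncard hA, sub_eq_zero, Nat.cast_inj] at hsum
  rw [hg.inter_support_eq_union, finite_union] at hA
  rw [← cast_ncard hA.1, ← cast_ncard hA.2, hsum]

end IsSignedSet

theorem IsSignature.finite_support {M : Matroid α} [M.Finitary] {O : Set (α → ℤ)}
    (hO : IsSignature {C | M.IsMinDepCircuit C} O) {C : α → ℤ} (hC : C ∈ O) :
    (support C).Finite :=
  Matroid.IsCircuit.finite (hO.dom_mem C hC)

theorem balanced_after_deleting_positive_circuits_general {𝒜 : Set (α → ℤ)} {D : α → ℤ}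
    (hpos : ∀ C ∈ 𝒜, IsPositive C) (hdisj : 𝒜.PairwiseDisjoint support)
    (hfin : ((⋃ C ∈ 𝒜, support C) ∩ support D).Finite)
    (horth : ∀ C ∈ 𝒜, ∑ᶠ e, C e * D e = 0)
    (hsigned : IsSignedSet D)
    (hbal : Cardinal.mk {e | D e = 1} = Cardinal.mk {e | D e = -1}) :
    Cardinal.mk {e | e ∈ support D \ (⋃ C ∈ 𝒜, support C) ∧ D e = 1} =
      Cardinal.mk {e | e ∈ support D \ (⋃ C ∈ 𝒜, support C) ∧ D e = -1} := by
  have hsum := finsum_mem_biUnion_support_eq_zero hpos hdisj hfin horth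
  have hremoved := hsigned.cardinalMk_inter_eq_of_finsum_mem_eq_zero hfin hsum
  rw [hsigned.inter_support_eq_union, finite_union] at hfin
  rw [setOf_mem_support_sdiff_and_eq D _ one_ne_zero,
    setOf_mem_support_sdiff_and_eq D _ (neg_ne_zero.mpr one_ne_zero)]
  exact cardinalMk_sdiff_eq_of_finite_inter hbal hfin.2 hremoved

/-- Deleting a finite set of pairwise disjoint positive signed circuits from a finitary
binary balanced oriented matroid preserves balancedness: for every signed cocircuit
`D ∈ Ostar` and every cocircuit `K` of the deletion with `K = dom D \ A` (where `A` is
the union of the domains of the deleted circuits), `K` contains equally many positive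
and negative elements of `D`. -/
theorem balanced_after_deleting_positive_circuits (M : Matroid α) [M.Finitary]
    (O Ostar : Set (α → ℤ))
    (hor : IsOrientation M O Ostar) (hbin : IsBinaryOrientation O Ostar)
    (hbal : IsBalanced Ostar)
    (𝒜 : Set (α → ℤ)) (hfin : 𝒜.Finite) (h𝒜O : 𝒜 ⊆ O) (hpos : ∀ C ∈ 𝒜, IsPositive C)
    (hdisj : 𝒜.Pairwise (fun C C' => Disjoint (Function.support C) (Function.support C'))) :
    ∀ D ∈ Ostar, ∀ K : Set α,
      (M.del (⋃ C ∈ 𝒜, Function.support C))✶.IsMinDepCircuit K →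
      K = Function.support D \ (⋃ C ∈ 𝒜, Function.support C) →
      Cardinal.mk {e : α | e ∈ K ∧ D e = 1} = Cardinal.mk {e : α | e ∈ K ∧ D e = -1} := by
  rintro D hD _ - rfl
  have hA := hfin.biUnion fun C hC ↦ hor.circuit_signature.finite_support (h𝒜O hC)
  exact balanced_after_deleting_positive_circuits_general hpos hdisj (hA.inter_of_left _)
    (fun C hC ↦ hbin C (h𝒜O hC) D hD) (hor.cocircuit_signature.signed D hD) (hbal D hD)
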